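/- arXiv:1310.3315 — 8 statements merged into one kernel-verified Lean document; each statement's English description precedes it below -/
import Mathlib

section
/- Let n ≥ 2 and let M be a real symmetric n×n matrix written in block form M = [[a, bᵀ],[b, C]], where a ∈ ℝ, b ∈ ℝ^{n−1} and C is a real symmetric (n−1)×(n−1) matrix. Then M is copositive if and only if: (i) a ≥ 0 and C is copositive, and (ii) for every nonzero vector y ∈ ℝ^{n−1} with all entries nonnegative and satisfying bᵀy ≤ 0, one has yᵀ(aC − b bᵀ)y ≥ 0. -/
/-!
On a nonnegative vector `(t, y)` the quadratic form of the block matrix is the real quadratic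
`a t² + 2 (b ⬝ y) t + yᵀ C y` in `t`. For fixed `y`, a quadratic `a t² + 2 s t + c` with `0 ≤ a` is
nonnegative on the half-line `t ≥ 0` exactly when `0 ≤ c` and, if `s ≤ 0`, also `0 ≤ a c - s²`
(`quadratic_nonneg_iff`). Taking `s = b ⬝ y` and `c = yᵀ C y` makes `a c - s²` the quadratic form of
`a C - b bᵀ` at `y`, which is the criterion.
-/

open Matrix

/-- A real symmetric matrix `M` is copositive if `xᵀ M x ≥ 0` for every
entrywise-nonnegative vector `x`. -/
def Copositive {n : Type*} [Fintype n] (M : Matrix n n ℝ) : Prop :=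
  ∀ x : n → ℝ, (∀ i, 0 ≤ x i) → 0 ≤ x ⬝ᵥ M.mulVec x

/-- For `0 < a` and `s ≤ 0` the minimum over the half-line is at `t = -s / a`; for `a = 0` the
condition `0 ≤ a * c - s ^ 2` forces `s = 0`. -/
theorem quadratic_nonneg_iff {a s c : ℝ} (ha : 0 ≤ a) :
    (∀ t : ℝ, 0 ≤ t → 0 ≤ a * t ^ 2 + 2 * s * t + c) ↔
      0 ≤ c ∧ (s ≤ 0 → 0 ≤ a * c - s ^ 2) := by
  constructor
  · intro h
    have hc : 0 ≤ c := by simpa using h 0 le_rfl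
    refine ⟨hc, fun hs => ?_⟩
    rcases ha.eq_or_lt with rfl | ha'
    · rcases hs.eq_or_lt with rfl | hs'
      · simp
      · have hpos : 0 < -2 * s := by linarith
        -- the linear function `2 s t + c` takes the value `-1` at this `t`
        have h1 := h ((c + 1) / (-2 * s)) (div_nonneg (by linarith) hpos.le)
        have h2 : 2 * s * ((c + 1) / (-2 * s)) = -(c + 1) := by
          have := hs'.ne
          field_simp
        linarith
    · have h1 := h (-s / a) (div_nonneg (by linarith) ha)
      have h2 : a * c - s ^ 2 = a * (a * (-s / a) ^ 2 + 2 * s * (-s / a) + c) := by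
        field_simp
        ring
      rw [h2]
      exact mul_nonneg ha h1
  · rintro ⟨hc, h⟩ t ht
    rcases le_total 0 s with hs | hs
    · positivity
    · have hd := h hs
      rcases ha.eq_or_lt with rfl | ha'
      · have : s = 0 := by nlinarith
        subst this
        simpa using hc
      · refine nonneg_of_mul_nonneg_right (a := a) ?_ ha'
        nlinarith [sq_nonneg (a * t + s)]

theorem fromBlocks_quadForm {m : ℕ} (a : ℝ) (b : Fin m → ℝ) (C : Matrix (Fin m) (Fin m) ℝ)
    (x : Fin 1 ⊕ Fin m → ℝ) :
    x ⬝ᵥ (Matrix.fromBlocks (Matrix.of fun (_ : Fin 1) (_ : Fin 1) => a)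
        (Matrix.of fun (_ : Fin 1) (j : Fin m) => b j)
        (Matrix.of fun (i : Fin m) (_ : Fin 1) => b i) C).mulVec x =
      a * x (Sum.inl 0) ^ 2 + 2 * (b ⬝ᵥ (x ∘ Sum.inr)) * x (Sum.inl 0) +
        (x ∘ Sum.inr) ⬝ᵥ C.mulVec (x ∘ Sum.inr) := by
  have h : ∑ i, x (Sum.inr i) * (b i * x (Sum.inl 0)) =
      (∑ i, b i * x (Sum.inr i)) * x (Sum.inl 0) := by
    rw [Finset.sum_mul]
    exact Finset.sum_congr rfl fun i _ => by ring
  simp only [dotProduct, Matrix.mulVec, Fintype.sum_sum_type, Fin.sum_univ_one,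
    Matrix.fromBlocks_apply₁₁, Matrix.fromBlocks_apply₁₂, Matrix.fromBlocks_apply₂₁,
    Matrix.fromBlocks_apply₂₂, Matrix.of_apply, Function.comp_apply, mul_add,
    Finset.sum_add_distrib, h]
  ring

theorem schur_quadForm {m : ℕ} (a : ℝ) (b : Fin m → ℝ) (C : Matrix (Fin m) (Fin m) ℝ)
    (y : Fin m → ℝ) :
    y ⬝ᵥ (a • C - Matrix.vecMulVec b b).mulVec y =
      a * (y ⬝ᵥ C.mulVec y) - (b ⬝ᵥ y) ^ 2 := by
  rw [Matrix.sub_mulVec, Matrix.smul_mulVec, dotProduct_sub, dotProduct_smul,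
    Matrix.vecMulVec_mulVec, smul_eq_mul]
  simp [dotProduct_smul, dotProduct_comm y b, sq]

/-- Copositivity criterion for a block matrix `M = [[a, bᵀ],[b, C]]` of size `n = m + 1 ≥ 2`. -/
theorem copositivity_criterion (m : ℕ) (hm : 1 ≤ m) (a : ℝ) (b : Fin m → ℝ)
    (C : Matrix (Fin m) (Fin m) ℝ) (hC : C.IsSymm) :
    Copositive
      (Matrix.fromBlocks (Matrix.of fun (_ : Fin 1) (_ : Fin 1) => a)
        (Matrix.of fun (_ : Fin 1) (j : Fin m) => b j)
        (Matrix.of fun (i : Fin m) (_ : Fin 1) => b i) C) ↔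
      (0 ≤ a ∧ Copositive C) ∧
        ∀ y : Fin m → ℝ, y ≠ 0 → (∀ i, 0 ≤ y i) → b ⬝ᵥ y ≤ 0 →
          0 ≤ y ⬝ᵥ (a • C - Matrix.vecMulVec b b).mulVec y := by
  have key : ∀ y : Fin m → ℝ, (∀ i, 0 ≤ y i) → ∀ t : ℝ, 0 ≤ t →
      ∀ i, 0 ≤ Sum.elim (fun _ : Fin 1 => t) y i := by
    rintro y hy t ht (i | i)
    · exact ht
    · exact hy i
  constructor
  · intro h
    have hq : ∀ y : Fin m → ℝ, (∀ i, 0 ≤ y i) → ∀ t : ℝ, 0 ≤ t →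
        0 ≤ a * t ^ 2 + 2 * (b ⬝ᵥ y) * t + y ⬝ᵥ C.mulVec y := by
      intro y hy t ht
      have := h _ (key y hy t ht)
      rwa [fromBlocks_quadForm, Sum.elim_comp_inr, Sum.elim_inl] at this
    have ha : 0 ≤ a := by
      simpa using hq 0 (fun _ => le_rfl) 1 zero_le_one
    refine ⟨⟨ha, fun y hy => ((quadratic_nonneg_iff ha).1 (hq y hy)).1⟩, fun y _ hy hb => ?_⟩
    rw [schur_quadForm]
    exact ((quadratic_nonneg_iff ha).1 (hq y hy)).2 hb
  · rintro ⟨⟨ha, hCop⟩, h⟩ x hx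
    rw [fromBlocks_quadForm]
    have hy : ∀ i, 0 ≤ (x ∘ Sum.inr) i := fun i => hx (Sum.inr i)
    refine (quadratic_nonneg_iff ha).2 ⟨hCop _ hy, fun hs => ?_⟩ _ (hx _)
    rw [← schur_quadForm]
    by_cases h0 : x ∘ Sum.inr = 0
    · simp [h0]
    · exact h _ h0 hy hs
end

section
/- Let θ_w ∈ (0, π/4), s = sin θ_w, c = cos θ_w, let g > 0, and set g_BL = g·s/√(c²−s²). Let k, v_L, v_R ∈ ℝ and put v² = k² + v_L². Let M = (1/4)·[[g²(k²+v_L²), −g²k², −g·g_BL·v_L²], [−g²k², g²(k²+v_R²), −g·g_BL·v_R²], [−g·g_BL·v_L², −g·g_BL·v_R², g_BL²(v_L²+v_R²)]] and let R = [[s, s, √(c²−s²)], [c, −s²/c, −s√(c²−s²)/c], [0, √(c²−s²)/c, −s/c]]. Then R·M·Rᵀ = [[0,0,0],[0, M_LL², M_LR²],[0, M_LR², M_RR²]], where M_LL² = g²v²/(4c²), M_LR² = g²(v² s² − k² c²)/(4 c² √(c²−s²)), and M_RR² = g²(2 v² s⁴ + 2(k²+v_R²) c⁴ − 4 k² s²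 c²)/(8 c² (c²−s²)). -/
open Matrix Real

/-!
The mass term is a sum of three squares, one for each vacuum expectation value: the quadratic form
of `M` is `(1/4) (k² (g W_L - g W_R)² + v_L² (g W_L - g_BL B)² + v_R² (g W_R - g_BL B)²)`, that is
`M = (1/4) Gᵀ D G` with `D = diag(k², v_L², v_R²)` and the rows of `G` the three linear forms.
Hence `R M Rᵀ = (1/4) (G Rᵀ)ᵀ D (G Rᵀ)`. With `r = √(c² - s²)`, the matrix `G Rᵀ` is very sparse:
its first column vanishes, because all three forms annihilate the photon direction, and the `v_R`
form does not involve `Z_L`. The remaining entries simplify by `s² + c² = 1` and `s² + r² = c²`.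
-/

namespace ALRM

/-- The linear forms in `(W_L³, W_R³, B)` that couple to `k`, `v_L` and `v_R`. -/
def couplings (g b : ℝ) : Matrix (Fin 3) (Fin 3) ℝ :=
  !![g, -g, 0;
     g, 0, -b;
     0, g, -b]

lemma mass_eq_sum_of_squares (g b k vL vR : ℝ) :
    (1/4 : ℝ) • !![g^2*(k^2 + vL^2), -g^2*k^2, -g*b*vL^2;
                   -g^2*k^2, g^2*(k^2 + vR^2), -g*b*vR^2;
                   -g*b*vL^2, -g*b*vR^2, b^2*(vL^2 + vR^2)] =
      (1/4 : ℝ) • ((couplings g b)ᵀ * diagonal ![k^2, vL^2, vR^2] * couplings g b) := by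
  congr 1
  ext i j
  fin_cases i <;> fin_cases j <;>
    simp [couplings, Matrix.mul_apply, Fin.sum_univ_three, Matrix.diagonal_apply] <;> ring

/-- The three linear forms expressed in the basis `(A, Z_L, Z_R)`. -/
lemma couplings_mul_rotation (g s c r : ℝ) (hc : c ≠ 0) (hr : r ≠ 0) (h1 : s^2 + c^2 = 1)
    (h : s^2 + r^2 = c^2) :
    couplings g (g * s / r) * !![s, s, r; c, -s^2/c, -s*r/c; 0, r/c, -s/c]ᵀ =
      !![0, g/c, -g*r/c;
         0, g/c, g*s^2/(r*c);
         0, 0, g*c/r] := by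
  ext i j
  fin_cases i <;> fin_cases j <;>
    simp [couplings, Matrix.mul_apply, Fin.sum_univ_three] <;> field_simp <;>
    first
      | ring1
      | linear_combination h
      | linear_combination h1
      | linear_combination g * h
      | linear_combination g * h1

end ALRM

/-- Rotating the ALRM neutral gauge boson mass matrix to the `(A, Z_L, Z_R)` basis
block-diagonalizes it, giving a massless photon and the `2×2` `Z_L`–`Z_R` block. -/
theorem rotated_mass_matrix (θw : ℝ) (hθ : θw ∈ Set.Ioo 0 (π/4)) (g : ℝ) (hg : 0 < g)
    (k vL vR : ℝ) :
    let s := Real.sin θw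
    let c := Real.cos θw
    let gBL := g * s / Real.sqrt (c^2 - s^2)
    let v2 := k^2 + vL^2
    let M : Matrix (Fin 3) (Fin 3) ℝ :=
      (1/4 : ℝ) • !![g^2*(k^2 + vL^2), -g^2*k^2, -g*gBL*vL^2;
                     -g^2*k^2, g^2*(k^2 + vR^2), -g*gBL*vR^2;
                     -g*gBL*vL^2, -g*gBL*vR^2, gBL^2*(vL^2 + vR^2)]
    let R : Matrix (Fin 3) (Fin 3) ℝ :=
      !![s, s, Real.sqrt (c^2 - s^2);
         c, -s^2/c, -s*Real.sqrt (c^2 - s^2)/c;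
         0, Real.sqrt (c^2 - s^2)/c, -s/c]
    let MLL := g^2 * v2 / (4*c^2)
    let MLR := g^2 * (v2 * s^2 - k^2 * c^2) / (4 * c^2 * Real.sqrt (c^2 - s^2))
    let MRR := g^2 * (2*v2*s^4 + 2*(k^2 + vR^2)*c^4 - 4*k^2*s^2*c^2) / (8 * c^2 * (c^2 - s^2))
    R * M * Rᵀ = !![0, 0, 0; 0, MLL, MLR; 0, MLR, MRR] := by
  intro s c gBL v2 M R MLL MLR MRR
  have hs : 0 < s := Real.sin_pos_of_pos_of_lt_pi hθ.1 (by linarith [hθ.2, Real.pi_pos])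
  have hc : 0 < c := Real.cos_pos_of_mem_Ioo ⟨by linarith [hθ.1, Real.pi_pos],
    by linarith [hθ.2, Real.pi_pos]⟩
  have h1 : s^2 + c^2 = 1 := Real.sin_sq_add_cos_sq θw
  -- `c² - s² = cos 2θ`, and `2θ` lies in `(0, π/2)`.
  have hpos : 0 < c^2 - s^2 := by
    rw [← Real.cos_two_mul']
    exact Real.cos_pos_of_mem_Ioo ⟨by linarith [hθ.1, Real.pi_pos], by linarith [hθ.2]⟩
  have hr : 0 < √(c^2 - s^2) := Real.sqrt_pos.2 hpos
  have hr2 : √(c^2 - s^2)^2 = c^2 - s^2 := Real.sq_sqrt hpos.le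
  have hG := ALRM.couplings_mul_rotation g s c (√(c^2 - s^2)) hc.ne' hr.ne' h1
    (by linear_combination hr2)
  have hM : M = _ := ALRM.mass_eq_sum_of_squares g gBL k vL vR
  have key : R * M * Rᵀ = (1/4 : ℝ) • ((ALRM.couplings g gBL * Rᵀ)ᵀ *
      diagonal ![k^2, vL^2, vR^2] * (ALRM.couplings g gBL * Rᵀ)) := by
    rw [hM]
    simp only [Matrix.mul_smul, Matrix.smul_mul, Matrix.transpose_mul, Matrix.transpose_transpose,
      Matrix.mul_assoc]
  rw [key, hG]
  simp only [MLL, MLR, MRR, v2]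
  clear_value s c
  generalize √(c^2 - s^2) = r at hr hr2 ⊢
  rw [← hr2]
  have hc' := hc.ne'
  have hr' := hr.ne'
  have hs2 : s^2 = c^2 - r^2 := by linear_combination hr2
  have hs4 : s^4 = (c^2 - r^2)^2 := by rw [← hs2]; ring
  ext i j
  fin_cases i <;> fin_cases j <;>
    simp [Matrix.mul_apply, Fin.sum_univ_three, Matrix.diagonal_apply, -mul_eq_zero] <;>
    field_simp <;> (try simp only [hs2, hs4]) <;> ring
end

section
/- Let μ₁², μ₂², μ₃, λ₁, λ₃, λ₄, α₁₂ be real parameters with λ₃ > 0, λ₄ ≠ λ₃ and λ₁λ₃ ≠ α₁₂², and define V(k, v_L, v_R) = −(1/2)μ₁²k² + (1/4)λ₁k⁴ − (1/2)μ₂²(v_L² + v_R²) + (1/4)λ₃(v_L⁴ + v_R⁴) + (1/2)λ₄ v_L² v_R² + (1/2)α₁₂ k²(v_L² + v_R²) + (μ₃/√2)·k·v_L·v_R. Let k, v_L, v_R > 0 with v_L ≠ v_R. Then the gradient of V vanishes at (k, v_L, v_R) if and only if the following three relations hold: v_L v_R = −μ₃ k/(√2(λ₄ − λ₃)), v_L²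 + v_R² = (μ₂² − α₁₂ k²)/λ₃, and k² = (2(λ₃μ₁² − α₁₂μ₂²)(λ₄ − λ₃) + λ₃μ₃²)/(2(λ₁λ₃ − α₁₂²)(λ₄ − λ₃)). -/
open Real

/-!
Write `S = vL² + vR²`, `P = vL vR`, `c = μ3 / √2` (so `c² = μ3² / 2`) and `d = l4 - l3`. With
`A = l3 S + a12 k² - μ2sq` and `B = d P + c k`, the two partial derivatives in the `v` directions are
`vL A + vR B` and `vR A + vL B`. This linear system in `(A, B)` has determinant `vL² - vR² ≠ 0`, so
they vanish iff `A = B = 0`, which are the first two relations. Multiplying the partial derivative in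
`k` by `l3 d / k` and eliminating `S` and `P` gives the third one (`minimization_algebra`).
The gradient itself is computed in `hasFDerivAt_potential`.
-/

open ContinuousLinearMap in
/-- The vacuum potential, with `c` in place of `μ3 / √2`, and its gradient, written as a
combination of the three coordinate projections. -/
theorem hasFDerivAt_potential (m1 m2 c l1 l3 l4 a k vL vR : ℝ) :
    HasFDerivAt (fun p : ℝ × ℝ × ℝ =>
        -(1/2) * m1 * p.1 ^ 2 + (1/4) * l1 * p.1 ^ 4
          - (1/2) * m2 * (p.2.1 ^ 2 + p.2.2 ^ 2)
          + (1/4) * l3 * (p.2.1 ^ 4 + p.2.2 ^ 4)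
          + (1/2) * l4 * p.2.1 ^ 2 * p.2.2 ^ 2
          + (1/2) * a * p.1 ^ 2 * (p.2.1 ^ 2 + p.2.2 ^ 2)
          + c * p.1 * p.2.1 * p.2.2)
      ((-m1 * k + l1 * k ^ 3 + a * k * (vL ^ 2 + vR ^ 2) + c * (vL * vR)) • fst ℝ ℝ (ℝ × ℝ) +
        (vL * (l3 * (vL ^ 2 + vR ^ 2) + a * k ^ 2 - m2) + vR * ((l4 - l3) * (vL * vR) + c * k)) •
          (fst ℝ ℝ ℝ).comp (snd ℝ ℝ (ℝ × ℝ)) +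
        (vR * (l3 * (vL ^ 2 + vR ^ 2) + a * k ^ 2 - m2) + vL * ((l4 - l3) * (vL * vR) + c * k)) •
          (snd ℝ ℝ ℝ).comp (snd ℝ ℝ (ℝ × ℝ))) (k, vL, vR) := by
  have h1 : HasFDerivAt (fun p : ℝ × ℝ × ℝ => p.1) (fst ℝ ℝ (ℝ × ℝ)) (k, vL, vR) :=
    hasFDerivAt_fst
  have h2 : HasFDerivAt (fun p : ℝ × ℝ × ℝ => p.2.1)
      ((fst ℝ ℝ ℝ).comp (snd ℝ ℝ (ℝ × ℝ))) (k, vL, vR) :=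
    ((fst ℝ ℝ ℝ).comp (snd ℝ ℝ (ℝ × ℝ))).hasFDerivAt
  have h3 : HasFDerivAt (fun p : ℝ × ℝ × ℝ => p.2.2)
      ((snd ℝ ℝ ℝ).comp (snd ℝ ℝ (ℝ × ℝ))) (k, vL, vR) :=
    ((snd ℝ ℝ ℝ).comp (snd ℝ ℝ (ℝ × ℝ))).hasFDerivAt
  have H := (((((((h1.pow 2).const_mul (-(1/2) * m1)).add ((h1.pow 4).const_mul ((1/4) * l1))).sub
    (((h2.pow 2).add (h3.pow 2)).const_mul ((1/2) * m2))).add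
    (((h2.pow 4).add (h3.pow 4)).const_mul ((1/4) * l3))).add
    (((h2.pow 2).const_mul ((1/2) * l4)).mul (h3.pow 2))).add
    (((h1.pow 2).const_mul ((1/2) * a)).mul ((h2.pow 2).add (h3.pow 2)))).add
    (((h1.const_mul c).mul h2).mul h3)
  refine H.congr_fderiv ?_
  ext <;> simp <;> ring

/-- A combination of the three coordinate projections vanishes iff its coefficients do. -/
theorem coord_comb_eq_zero_iff (x y z : ℝ) :
    x • ContinuousLinearMap.fst ℝ ℝ (ℝ × ℝ) +
        y • (ContinuousLinearMap.fst ℝ ℝ ℝ).comp (ContinuousLinearMap.snd ℝ ℝ (ℝ × ℝ)) +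
        z • (ContinuousLinearMap.snd ℝ ℝ ℝ).comp (ContinuousLinearMap.snd ℝ ℝ (ℝ × ℝ)) = 0 ↔
      x = 0 ∧ y = 0 ∧ z = 0 := by
  constructor
  · intro h
    refine ⟨?_, ?_, ?_⟩
    · simpa using DFunLike.congr_fun h (1, 0, 0)
    · simpa using DFunLike.congr_fun h (0, 1, 0)
    · simpa using DFunLike.congr_fun h (0, 0, 1)
  · rintro ⟨rfl, rfl, rfl⟩
    simp

/-- The stationarity equations are equivalent to the three relations in denominator-free form. -/
theorem minimization_algebra (m1 m2 c l1 l3 l4 a k vL vR : ℝ)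
    (hl3 : l3 ≠ 0) (hd : l4 - l3 ≠ 0) (hk : k ≠ 0) (hv : vL ^ 2 - vR ^ 2 ≠ 0) :
    (-m1 * k + l1 * k ^ 3 + a * k * (vL ^ 2 + vR ^ 2) + c * (vL * vR) = 0 ∧
      vL * (l3 * (vL ^ 2 + vR ^ 2) + a * k ^ 2 - m2) + vR * ((l4 - l3) * (vL * vR) + c * k) = 0 ∧
      vR * (l3 * (vL ^ 2 + vR ^ 2) + a * k ^ 2 - m2) + vL * ((l4 - l3) * (vL * vR) + c * k) = 0) ↔
    ((l4 - l3) * (vL * vR) + c * k = 0 ∧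
      l3 * (vL ^ 2 + vR ^ 2) + a * k ^ 2 - m2 = 0 ∧
      k ^ 2 * ((l1 * l3 - a ^ 2) * (l4 - l3)) =
        (l3 * m1 - a * m2) * (l4 - l3) + l3 * c ^ 2) := by
  constructor
  · rintro ⟨h1, h2, h3⟩
    have hA : l3 * (vL ^ 2 + vR ^ 2) + a * k ^ 2 - m2 = 0 :=
      mul_left_cancel₀ hv (by linear_combination vL * h2 - vR * h3)
    have hB : (l4 - l3) * (vL * vR) + c * k = 0 :=
      mul_left_cancel₀ hv (by linear_combination vL * h3 - vR * h2)
    refine ⟨hB, hA, mul_left_cancel₀ hk ?_⟩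
    linear_combination l3 * (l4 - l3) * h1 - a * k * (l4 - l3) * hA - c * l3 * hB
  · rintro ⟨hB, hA, hK⟩
    refine ⟨mul_left_cancel₀ (mul_ne_zero hl3 hd) ?_, ?_, ?_⟩
    · linear_combination k * hK + a * k * (l4 - l3) * hA + c * l3 * hB
    · linear_combination vL * hA + vR * hB
    · linear_combination vR * hA + vL * hB

/-- The minimization conditions of the ALRM Higgs potential: at a point with
`k, v_L, v_R > 0` and `v_L ≠ v_R`, the gradient of the vacuum potential vanishes
iff the three vev relations hold. -/
theorem minimization_conditions (μ1sq μ2sq μ3 l1 l3 l4 a12 : ℝ)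
    (hl3 : 0 < l3) (hl43 : l4 ≠ l3) (hdet : l1 * l3 ≠ a12 ^ 2)
    (k vL vR : ℝ) (hk : 0 < k) (hvL : 0 < vL) (hvR : 0 < vR) (hne : vL ≠ vR) :
    fderiv ℝ (fun p : ℝ × ℝ × ℝ =>
        -(1/2) * μ1sq * p.1 ^ 2 + (1/4) * l1 * p.1 ^ 4
          - (1/2) * μ2sq * (p.2.1 ^ 2 + p.2.2 ^ 2)
          + (1/4) * l3 * (p.2.1 ^ 4 + p.2.2 ^ 4)
          + (1/2) * l4 * p.2.1 ^ 2 * p.2.2 ^ 2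
          + (1/2) * a12 * p.1 ^ 2 * (p.2.1 ^ 2 + p.2.2 ^ 2)
          + (μ3 / Real.sqrt 2) * p.1 * p.2.1 * p.2.2) (k, vL, vR) = 0 ↔
      (vL * vR = -μ3 * k / (Real.sqrt 2 * (l4 - l3)) ∧
        vL ^ 2 + vR ^ 2 = (μ2sq - a12 * k ^ 2) / l3 ∧
        k ^ 2 = (2 * (l3 * μ1sq - a12 * μ2sq) * (l4 - l3) + l3 * μ3 ^ 2) /
          (2 * (l1 * l3 - a12 ^ 2) * (l4 - l3))) := by
  have hd : l4 - l3 ≠ 0 := sub_ne_zero.mpr hl43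
  have hD : l1 * l3 - a12 ^ 2 ≠ 0 := sub_ne_zero.mpr hdet
  have hv : vL ^ 2 - vR ^ 2 ≠ 0 := by
    rw [sq_sub_sq]
    exact mul_ne_zero (by positivity) (sub_ne_zero.mpr hne)
  have hs : Real.sqrt 2 ≠ 0 := by positivity
  have hc : (μ3 / Real.sqrt 2) ^ 2 = μ3 ^ 2 / 2 := by
    rw [div_pow, Real.sq_sqrt (by norm_num)]
  rw [(hasFDerivAt_potential μ1sq μ2sq (μ3 / Real.sqrt 2) l1 l3 l4 a12 k vL vR).fderiv,
    coord_comb_eq_zero_iff, minimization_algebra _ _ _ _ _ _ _ _ _ _ hl3.ne' hd hk.ne' hv, hc]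
  refine and_congr ?_ (and_congr ?_ ?_)
  · have e : -μ3 * k / (Real.sqrt 2 * (l4 - l3)) = -(μ3 / Real.sqrt 2 * k) / (l4 - l3) := by
      field_simp
    rw [e, eq_div_iff hd]
    constructor <;> intro h <;> linear_combination h
  · rw [eq_div_iff hl3.ne']
    constructor <;> intro h <;> linear_combination h
  · rw [eq_div_iff (mul_ne_zero (mul_ne_zero two_ne_zero hD) hd)]
    constructor <;> intro h
    · linear_combination 2 * h
    · linear_combination h / 2
end

section
/- Let λ₁ ≥ 0 and λ₂ < 0 be real numbers, and let M₁₃ be the symmetric 2×2 matrix M₁₃ = [[λ₁λ₂², (1/2)λ₂(λ₁² + 6λ₁λ₂ + 4λ₂²)], [(1/2)λ₂(λ₁² + 6λ₁λ₂ + 4λ₂²), λ₁λ₂²]]. Then M₁₃ is copositive if and only if λ₁² + 8λ₁λ₂ + 4λ₂² ≤ 0. -/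
/-! With `a` on the diagonal and `b` off it, the quadratic form is
`a (x₀ - x₁)² + 2 (a + b) x₀ x₁`. As `a = λ₁λ₂² ≥ 0` here, copositivity is equivalent to
`a + b ≥ 0`: evaluate at `(1, 1)` for one direction and use the displayed identity for the other.
Finally `2 (a + b) = λ₂ (λ₁² + 8λ₁λ₂ + 4λ₂²)` with `λ₂ < 0`. -/

open Matrix

/-- Copositivity of a symmetric `2 × 2` matrix with equal nonnegative diagonal entries. -/
theorem copositive_equal_diag_iff {a b : ℝ} (ha : 0 ≤ a) :
    Copositive (!![a, b; b, a] : Matrix (Fin 2) (Fin 2) ℝ) ↔ 0 ≤ a + b := by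
  have form (x : Fin 2 → ℝ) : x ⬝ᵥ (!![a, b; b, a] : Matrix (Fin 2) (Fin 2) ℝ).mulVec x
      = a * (x 0 - x 1) ^ 2 + 2 * ((a + b) * (x 0 * x 1)) := by
    simp [dotProduct, mulVec, Fin.sum_univ_two]
    ring
  constructor
  · intro h
    have h' := h (fun _ => 1) (fun _ => zero_le_one)
    rw [form] at h'
    linarith
  · intro hab x hx
    rw [form]
    have := mul_nonneg hab (mul_nonneg (hx 0) (hx 1))
    positivity

/-- For `λ₁ ≥ 0` and `λ₂ < 0`, the matrix `M₁₃` is copositive iff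
`λ₁² + 8λ₁λ₂ + 4λ₂² ≤ 0`. -/
theorem M13_copositive_iff (l1 l2 : ℝ) (h1 : 0 ≤ l1) (h2 : l2 < 0) :
    Copositive (!![l1 * l2 ^ 2, (1/2) * l2 * (l1 ^ 2 + 6 * l1 * l2 + 4 * l2 ^ 2);
                   (1/2) * l2 * (l1 ^ 2 + 6 * l1 * l2 + 4 * l2 ^ 2), l1 * l2 ^ 2] :
        Matrix (Fin 2) (Fin 2) ℝ) ↔
      l1 ^ 2 + 8 * l1 * l2 + 4 * l2 ^ 2 ≤ 0 := by
  rw [copositive_equal_diag_iff (mul_nonneg h1 (sq_nonneg l2))]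
  have key : l1 * l2 ^ 2 + (1/2) * l2 * (l1 ^ 2 + 6 * l1 * l2 + 4 * l2 ^ 2)
      = (l2 / 2) * (l1 ^ 2 + 8 * l1 * l2 + 4 * l2 ^ 2) := by ring
  rw [key]
  exact ⟨fun h => by by_contra! hc; nlinarith [mul_neg_of_neg_of_pos h2 hc],
    fun h => mul_nonneg_of_nonpos_of_nonpos (by linarith) h⟩
end

section
/- Let λ₁, λ₂, λ₃, λ₄, α₁₂, α₁₃ be real numbers, set λ₁₂ = λ₁ + 2λ₂, and let V₈ be the associated symmetric 8×8 matrix of quartic couplings. If λ₁ ≥ 0, λ₂ ≤ 0, λ₃ ≥ 0, λ₄ ≥ 0, α₁₂ ≥ 0, α₁₃ ≥ 0, λ₁₂ ≤ 0, λ₁ + λ₂ ≥ 0 and λ₁² + 8λ₁λ₂ + 4λ₂² ≤ 0, then V₈ is copositive. -/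
/-!
The quadratic form of `V8` splits into a bidoublet block in `x 0, …, x 3`, a mixed part and a
`χ` block. The last two have nonnegative coefficients. With `s = x 0 + x 1 + x 2 + x 3`, the first
is `l1 * s ^ 2 + 4 * l2 * (x 0 * x 2 + x 1 * x 3)`. On the nonnegative orthant
`4 * (x 0 * x 2 + x 1 * x 3) ≤ (x 0 + x 2) ^ 2 + (x 1 + x 3) ^ 2 ≤ s ^ 2`, so, as `l2 ≤ 0`, the
block is at least `(l1 + l2) * s ^ 2 ≥ 0`.
-/

open Matrix

/-- The symmetric 8×8 matrix of quartic couplings of the ALRM Higgs potential,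
in the basis of the moduli-squared of `(φ₁⁰, φ₁⁺, φ₂⁰, φ₂⁺, χ_L⁰, χ_L⁺, χ_R⁰, χ_R⁺)`,
where `l12 = λ₁ + 2λ₂`. -/
def V8 (l1 l12 l3 l4 a12 a13 : ℝ) : Matrix (Fin 8) (Fin 8) ℝ :=
  !![l1,  l1,  l12, l1,  a13, a12, a13, a12;
     l1,  l1,  l1,  l12, a13, a12, a12, a13;
     l12, l1,  l1,  l1,  a12, a13, a12, a13;
     l1,  l12, l1,  l1,  a12, a13, a13, a12;
     a13, a13, a12, a12, l3,  l3,  l4,  l4;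
     a12, a12, a13, a13, l3,  l3,  l4,  l4;
     a13, a12, a12, a13, l4,  l4,  l3,  l3;
     a12, a13, a13, a12, l4,  l4,  l3,  l3]

/-- If `λ₁ ≥ 0`, `λ₂ ≤ 0`, `λ₃ ≥ 0`, `λ₄ ≥ 0`, `α₁₂ ≥ 0`, `α₁₃ ≥ 0`, `λ₁₂ ≤ 0`,
`λ₁ + λ₂ ≥ 0` and `λ₁² + 8λ₁λ₂ + 4λ₂² ≤ 0`, then `V₈` is copositive. -/
theorem V8_copositive_of_neg_l12 (l1 l2 l3 l4 a12 a13 : ℝ)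
    (h1 : 0 ≤ l1) (h2 : l2 ≤ 0) (h3 : 0 ≤ l3) (h4 : 0 ≤ l4)
    (ha12 : 0 ≤ a12) (ha13 : 0 ≤ a13) (h12 : l1 + 2 * l2 ≤ 0)
    (hsum : 0 ≤ l1 + l2) (hquad : l1 ^ 2 + 8 * l1 * l2 + 4 * l2 ^ 2 ≤ 0) :
    Copositive (V8 l1 (l1 + 2 * l2) l3 l4 a12 a13) := by
  intro x hx
  have p0 := hx 0; have p1 := hx 1; have p2 := hx 2; have p3 := hx 3
  have p4 := hx 4; have p5 := hx 5; have p6 := hx 6; have p7 := hx 7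
  -- The bidoublet block equals `l1 * s ^ 2 + 4 * l2 * (x 0 * x 2 + x 1 * x 3)`.
  have hphi : 0 ≤ l1 * (x 0 + x 1 + x 2 + x 3) ^ 2 + 4 * l2 * (x 0 * x 2 + x 1 * x 3) := by
    have hle : 4 * (x 0 * x 2 + x 1 * x 3) ≤ (x 0 + x 1 + x 2 + x 3) ^ 2 := by
      nlinarith [sq_nonneg (x 0 - x 2), sq_nonneg (x 1 - x 3),
        mul_nonneg (add_nonneg p0 p2) (add_nonneg p1 p3)]
    linarith [mul_le_mul_of_nonpos_left hle h2,
      mul_nonneg hsum (sq_nonneg (x 0 + x 1 + x 2 + x 3))]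
  -- Each remaining entry of the matrix is nonnegative.
  have hmix : 0 ≤ 2 * a13 * (x 0 * (x 4 + x 6) + x 1 * (x 4 + x 7) + x 2 * (x 5 + x 7)
        + x 3 * (x 5 + x 6))
      + 2 * a12 * (x 0 * (x 5 + x 7) + x 1 * (x 5 + x 6) + x 2 * (x 4 + x 6)
        + x 3 * (x 4 + x 7)) := by positivity
  have hchi : 0 ≤ l3 * ((x 4 + x 5) ^ 2 + (x 6 + x 7) ^ 2)
      + 2 * l4 * ((x 4 + x 5) * (x 6 + x 7)) := by positivity
  refine (add_nonneg (add_nonneg hphi hmix) hchi).trans_eq ?_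
  simp [V8, Matrix.mulVec, dotProduct, Fin.sum_univ_eight]
  ring
end

section
/- Let λ₁, λ₂, λ₃, λ₄, α₁₂, α₁₃ be real numbers, set λ₁₂ = λ₁ + 2λ₂, and let V₈ be the associated symmetric 8×8 matrix of quartic couplings. If V₈ is copositive, then λ₁ + λ₂ ≥ 0. -/
open Matrix

/-- If `V₈` is copositive then `λ₁ + λ₂ ≥ 0`. -/
theorem V8_copositive_imp_sum_nonneg (l1 l2 l3 l4 a12 a13 : ℝ)
    (h : Copositive (V8 l1 (l1 + 2 * l2) l3 l4 a12 a13)) :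
    0 ≤ l1 + l2 := by
  -- The test vector `e₀ + e₂` (the fields `φ₁⁰` and `φ₂⁰` switched on equally) gives
  -- `xᵀ V₈ x = λ₁ + λ₁ + 2 λ₁₂ = 4 (λ₁ + λ₂)`.
  have key := h ![1, 0, 1, 0, 0, 0, 0, 0] (by intro i; fin_cases i <;> simp)
  simp [V8, Matrix.mulVec, dotProduct, Fin.sum_univ_succ] at key
  linarith
end

section
/- Let λ₁, λ₂, λ₃, λ₄, α₁₂, α₁₃ be real numbers, set λ₁₂ = λ₁ + 2λ₂, and let V₈ be the associated symmetric 8×8 matrix of quartic couplings. If V₈ is copositive, then: (i) if α₁₃ ≤ 0 then λ₁λ₃ − α₁₃² ≥ 0, and (ii) if α₁₂ ≤ 0 then λ₁λ₃ − α₁₂² ≥ 0. -/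
/-!
A principal submatrix of a copositive matrix is copositive, and a copositive 2×2 matrix
`!![A, B; B, C]` with `B ≤ 0` has nonnegative determinant, because its form cannot become negative
on vectors with entries of opposite signs either.  In `V₈` the pair `(φ₁⁰, χ_L⁰)` gives the
submatrix `!![λ₁, α₁₃; α₁₃, λ₃]`, and `(φ₁⁰, χ_L⁺)` gives `!![λ₁, α₁₂; α₁₂, λ₃]`.
-/

open Matrix

/-- Copositive 2×2 forms with nonpositive off-diagonal entry have nonnegative determinant. -/
lemma det_nonneg_of_nonneg_on_quadrant {A B C : ℝ} (hB : B ≤ 0)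
    (h : ∀ s t : ℝ, 0 ≤ s → 0 ≤ t → 0 ≤ A * s ^ 2 + 2 * B * s * t + C * t ^ 2) :
    0 ≤ A * C - B ^ 2 := by
  have hA : 0 ≤ A := by simpa using h 1 0 zero_le_one le_rfl
  have hC : 0 ≤ C := by simpa using h 0 1 le_rfl zero_le_one
  rcases hA.eq_or_lt with rfl | hA
  · -- At `(C + 1, -B)` the form equals `-(C + 2) * B ^ 2`, which forces `B = 0`.
    have := h (C + 1) (-B) (by linarith) (by linarith)
    nlinarith [mul_nonneg hC (sq_nonneg B)]
  · -- At `(-B, A)`, the minimizing direction, the form equals `A` times the determinant.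
    have := h (-B) A (by linarith) hA.le
    exact nonneg_of_mul_nonneg_right (by linarith : 0 ≤ A * (A * C - B ^ 2)) hA

/-- Necessary conditions from copositivity of `V₈`: if `α₁₃ ≤ 0` then
`λ₁λ₃ − α₁₃² ≥ 0`, and if `α₁₂ ≤ 0` then `λ₁λ₃ − α₁₂² ≥ 0`. -/
theorem V8_copositive_necessary (l1 l2 l3 l4 a12 a13 : ℝ)
    (h : Copositive (V8 l1 (l1 + 2 * l2) l3 l4 a12 a13)) :
    (a13 ≤ 0 → 0 ≤ l1 * l3 - a13 ^ 2) ∧ (a12 ≤ 0 → 0 ≤ l1 * l3 - a12 ^ 2) := by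
  refine ⟨fun ha => det_nonneg_of_nonneg_on_quadrant ha fun s t hs ht => ?_,
    fun ha => det_nonneg_of_nonneg_on_quadrant ha fun s t hs ht => ?_⟩
  · have := h ![s, 0, 0, 0, t, 0, 0, 0] (by intro i; fin_cases i <;> simp [hs, ht])
    simp [V8, Matrix.mulVec, dotProduct, Fin.sum_univ_succ] at this
    linarith
  · have := h ![s, 0, 0, 0, 0, t, 0, 0] (by intro i; fin_cases i <;> simp [hs, ht])
    simp [V8, Matrix.mulVec, dotProduct, Fin.sum_univ_succ] at this
    linarith
end

section
/- Let λ₁, λ₂, λ₃, λ₄, α₁₂, α₁₃ be real numbers, set λ₁₂ = λ₁ + 2λ₂, let V₈ be the associated symmetric 8×8 matrix of quartic couplings, and let C be the 7×7 matrix obtained from V₈ by deleting its first row and first column. If λ₁ ≥ 0, λ₂ ≤ 0, λ₃ ≥ 0, λ₄ ≥ 0, α₁₂ ≥ 0, α₁₃ ≥ 0, λ₁₂ ≤ 0 and λ₁ + λ₂ ≥ 0, then C is copositive. -/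
/-!
Every entry of `C` is nonnegative except the coupling `l1 + 2 * l2` between the coordinates
`x 0` and `x 2` (the moduli-squared of `φ₁⁺` and `φ₂⁺`). The corresponding principal block is
handled by completing squares:
`l1 * (x 0 ^ 2 + x 2 ^ 2) + 2 * (l1 + 2 * l2) * x 0 * x 2
  = (l1 + l2) * (x 0 + x 2) ^ 2 + (-l2) * (x 0 - x 2) ^ 2`,
which is nonnegative since `l1 + l2 ≥ 0` and `l2 ≤ 0`. All remaining terms of the quadratic
form are products of nonnegative numbers.
-/


open Matrix

/-- The 7×7 submatrix `C` of `V₈` obtained by deleting its first row and column is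
copositive under the conditions `λ₁ ≥ 0, λ₂ ≤ 0, λ₃ ≥ 0, λ₄ ≥ 0, α₁₂ ≥ 0, α₁₃ ≥ 0,
λ₁₂ ≤ 0, λ₁ + λ₂ ≥ 0`. -/
theorem V8_minor_copositive (l1 l2 l3 l4 a12 a13 : ℝ)
    (h1 : 0 ≤ l1) (h2 : l2 ≤ 0) (h3 : 0 ≤ l3) (h4 : 0 ≤ l4)
    (ha12 : 0 ≤ a12) (ha13 : 0 ≤ a13) (h12 : l1 + 2 * l2 ≤ 0)
    (hsum : 0 ≤ l1 + l2) :
    Copositive ((V8 l1 (l1 + 2 * l2) l3 l4 a12 a13).submatrix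
      (Fin.succ : Fin 7 → Fin 8) (Fin.succ : Fin 7 → Fin 8)) := by
  intro x hx
  have e : x ⬝ᵥ ((V8 l1 (l1 + 2 * l2) l3 l4 a12 a13).submatrix
      (Fin.succ : Fin 7 → Fin 8) (Fin.succ : Fin 7 → Fin 8)).mulVec x =
      ((l1 + l2) * (x 0 + x 2) ^ 2 + (-l2) * (x 0 - x 2) ^ 2
        + l1 * (x 1 * (x 1 + 2 * (x 0 + x 2))))
      + (l3 * ((x 3 + x 4) ^ 2 + (x 5 + x 6) ^ 2) + 2 * l4 * ((x 3 + x 4) * (x 5 + x 6)))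
      + (2 * a12 * (x 0 * (x 4 + x 5) + x 1 * (x 3 + x 5) + x 2 * (x 3 + x 6))
        + 2 * a13 * (x 0 * (x 3 + x 6) + x 1 * (x 4 + x 6) + x 2 * (x 4 + x 5))) := by
    simp [V8, Matrix.mulVec, dotProduct, Fin.sum_univ_succ, Fin.succ]
    ring
  rw [e]
  have hn : 0 ≤ -l2 := neg_nonneg.mpr h2
  have p0 := hx 0
  have p1 := hx 1
  have p2 := hx 2
  have p3 := hx 3
  have p4 := hx 4
  have p5 := hx 5
  have p6 := hx 6
  have q := mul_nonneg hn (sq_nonneg (x 0 - x 2))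
  have r : 0 ≤ (l1 + l2) * (x 0 + x 2) ^ 2 := mul_nonneg hsum (sq_nonneg _)
  have A : 0 ≤ l1 * (x 1 * (x 1 + 2 * (x 0 + x 2))) := by positivity
  have B : 0 ≤ l3 * ((x 3 + x 4) ^ 2 + (x 5 + x 6) ^ 2)
      + 2 * l4 * ((x 3 + x 4) * (x 5 + x 6)) := by positivity
  have D : 0 ≤ 2 * a12 * (x 0 * (x 4 + x 5) + x 1 * (x 3 + x 5) + x 2 * (x 3 + x 6))
      + 2 * a13 * (x 0 * (x 3 + x 6) + x 1 * (x 4 + x 6) + x 2 * (x 4 + x 5)) := by positivity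
  linarith
end
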